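/- Let S be a nonnegative random variable with E[S] < ∞ and E[S²] < ∞, and fix a job size x > 0. If Var(S) > ( x + E[S] )², equivalently CV_S > 1 + x/E[S], then there exists a resetting rate r > 0 for which the mean service time under Poissonian resetting is strictly smaller than without resetting: ( e^{r·x} − S̃(r) ) / ( r·S̃(r) ) < x + E[S]. -/

import Mathlib

open MeasureTheory ProbabilityTheory Real

open Filter Topology in
lemma aux_tendsto (a : ℝ) :
    Tendsto (fun r : ℝ => (Real.exp (r * a) - 1 - r * a) / r ^ 2) (𝓝[>] 0) (𝓝 (a ^ 2 / 2)) := by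
  have h := Real.exp_sub_sum_range_succ_isLittleO_pow 2
  have ht : Tendsto (fun r : ℝ => r * a) (𝓝 0) (𝓝 0) := by
    have : Continuous (fun r : ℝ => r * a) := by fun_prop
    simpa using this.tendsto 0
  have h2 := h.comp_tendsto ht
  have h3 : (fun r : ℝ => (r * a) ^ 2) =O[𝓝 0] (fun r : ℝ => r ^ 2) := by
    apply Asymptotics.IsBigO.of_bound (a ^ 2)
    filter_upwards with r
    simp only [norm_pow, norm_mul, Real.norm_eq_abs, mul_pow, sq_abs]
    linarith
  have h4 := (h2.trans_isBigO h3).tendsto_div_nhds_zero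
  have h5 := (h4.mono_left (nhdsWithin_le_nhds (s := Set.Ioi 0))).add_const (a ^ 2 / 2)
  rw [zero_add] at h5
  refine h5.congr' ?_
  filter_upwards [self_mem_nhdsWithin] with r hr
  have hr : r ≠ 0 := ne_of_gt hr
  simp [Finset.sum_range_succ]
  field_simp
  ring

lemma aux_bound (t : ℝ) (ht : 0 ≤ t) : Real.exp (-t) ≤ 1 - t + t ^ 2 / 2 := by
  have h1 := Real.quadratic_le_exp_of_nonneg ht
  have h2 : Real.exp (-t) * Real.exp t = 1 := by rw [← Real.exp_add]; simp
  have h3 : (1:ℝ) ≤ (1 - t + t ^ 2 / 2) * Real.exp t := by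
    have : 0 ≤ 1 - t + t ^ 2 / 2 := by nlinarith [sq_nonneg (t - 1)]
    nlinarith [mul_le_mul_of_nonneg_left h1 this, sq_nonneg (t ^ 2)]
  exact le_of_mul_le_mul_right (h2.le.trans h3) (Real.exp_pos t)

/-- **Additive model: the variance condition makes resetting beneficial.**
If `Var(S) > (x + E[S])²` (equivalently `CV_S > 1 + x/E[S]`), then there exists a resetting
rate `r > 0` with `(e^{rx} − S̃(r))/(r·S̃(r)) < x + E[S]`, where `S̃(u) = E[e^{-uS}]`. -/
theorem additive_variance_condition_beneficial
    {Ω : Type*} [MeasurableSpace Ω] {P : Measure Ω} [IsProbabilityMeasure P]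
    (S : Ω → ℝ) (hSmeas : Measurable S) (hSnn : ∀ ω, 0 ≤ S ω)
    (hS1 : Integrable S P) (hS2 : Integrable (fun ω => S ω ^ 2) P)
    (x : ℝ) (hx : 0 < x)
    (hVar : variance S P > (x + ∫ ω, S ω ∂P) ^ 2)
    (Stilde : ℝ → ℝ)
    (hSt : ∀ u : ℝ, Stilde u = ∫ ω, Real.exp (-(u * S ω)) ∂P) :
    ∃ r : ℝ, 0 < r ∧
      (Real.exp (r * x) - Stilde r) / (r * Stilde r) < x + ∫ ω, S ω ∂P := by
  classical
  set m := ∫ ω, S ω ∂P with hm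
  have hmem : MemLp S 2 P := (memLp_two_iff_integrable_sq hSmeas.aestronglyMeasurable).2 hS2
  have hv : variance S P = (∫ ω, S ω ^ 2 ∂P) - m ^ 2 := by
    rw [variance_eq_sub hmem]; simp [hm]
  rw [hv] at hVar
  have hG : Filter.Tendsto (fun r : ℝ => ∫ ω, (Real.exp (r * -S ω) - 1 - r * -S ω) / r ^ 2 ∂P)
      (nhdsWithin 0 (Set.Ioi 0)) (nhds (∫ ω, (-S ω) ^ 2 / 2 ∂P)) := by
    refine tendsto_integral_filter_of_dominated_convergence (fun ω => S ω ^ 2 / 2) ?_ ?_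
      (hS2.div_const 2) ?_
    · filter_upwards with r
      exact Measurable.aestronglyMeasurable (by fun_prop)
    · filter_upwards [self_mem_nhdsWithin] with r hr
      have hr : 0 < r := hr
      filter_upwards with ω
      have h1 := aux_bound (r * S ω) (mul_nonneg hr.le (hSnn ω))
      have h2 := Real.add_one_le_exp (r * -S ω)
      rw [← mul_neg] at h1
      rw [Real.norm_eq_abs, abs_of_nonneg (div_nonneg (by linarith) (by positivity)),
        div_le_iff₀ (by positivity)]
      nlinarith
    · filter_upwards with ω
      exact aux_tendsto (-S ω)
  have hG2 : ∫ ω, (-S ω) ^ 2 / 2 ∂P = (∫ ω, S ω ^ 2 ∂P) / 2 := by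
    simp only [neg_sq]; exact integral_div _ _
  rw [hG2] at hG
  have hlin : Filter.Tendsto (fun r : ℝ => 1 + r * (x + m)) (nhdsWithin 0 (Set.Ioi 0)) (nhds 1) := by
    have : Continuous (fun r : ℝ => 1 + r * (x + m)) := by fun_prop
    simpa using (this.tendsto 0).mono_left (nhdsWithin_le_nhds (s := Set.Ioi 0))
  have hR := (hG.mul hlin).sub_const (m * (x + m))
  have hev := (aux_tendsto x).eventually_lt hR (by nlinarith)
  obtain ⟨r, hlt, hr⟩ := (hev.and self_mem_nhdsWithin).exists
  have hr : 0 < r := hr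
  refine ⟨r, hr, ?_⟩
  have hint : Integrable (fun ω => Real.exp (-(r * S ω))) P := by
    refine Integrable.of_bound (Measurable.aestronglyMeasurable (by fun_prop)) 1 ?_
    filter_upwards with ω
    rw [Real.norm_eq_abs, Real.abs_exp, Real.exp_le_one_iff]
    have := mul_nonneg hr.le (hSnn ω)
    linarith
  have hLpos : 0 < Stilde r := by
    rw [hSt]; exact integral_exp_pos hint
  have hGe : ∫ ω, (Real.exp (r * -S ω) - 1 - r * -S ω) / r ^ 2 ∂P
      = (Stilde r - 1 + r * m) / r ^ 2 := by
    rw [integral_div, hSt, hm]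
    congr 1
    simp only [mul_neg, sub_neg_eq_add]
    have e1 : Integrable (fun ω => Real.exp (-(r * S ω)) - 1) P := hint.sub (integrable_const 1)
    rw [integral_add e1 (hS1.const_mul r), integral_sub hint (integrable_const 1),
      integral_const_mul]
    simp
  rw [hGe] at hlt
  rw [div_lt_iff₀ (by positivity)]
  have hr2 : 0 < r ^ 2 := by positivity
  have h6 := mul_lt_mul_of_pos_right hlt hr2
  have h7 : ((Stilde r - 1 + r * m) / r ^ 2 * (1 + r * (x + m)) - m * (x + m)) * r ^ 2
      = (Stilde r - 1 + r * m) * (1 + r * (x + m)) - m * (x + m) * r ^ 2 := by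
    field_simp
  rw [div_mul_cancel₀ _ hr2.ne', h7] at h6
  nlinarith
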